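/- Let Γ be a finite simple graph such that for all vertices u, v, if lk(u) ⊆ st(v) then u = v (i.e. Out(A_Γ) contains no transvections). Then the set of elements of Out(A_Γ) that are represented by an automorphism φ of A_Γ sending, for each vertex v, the generator PresentedGroup.of v to a conjugate of itself, is a subgroup of finite index in Out(A_Γ). -/

import Mathlib

open scoped commutatorElement

/-- The set of relators of a right-angled Artin group: commutators of adjacent vertices. -/
def raagRels {V : Type*} (Γ : SimpleGraph V) : Set (FreeGroup V) :=
  {r | ∃ v w : V, Γ.Adj v w ∧ r = ⁅FreeGroup.of v, FreeGroup.of w⁆}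

/-- The right-angled Artin group of a simple graph. -/
abbrev RAAG {V : Type*} (Γ : SimpleGraph V) : Type _ := PresentedGroup (raagRels Γ)

instance conjRangeNormal (G : Type*) [Group G] :
    ((MulAut.conj : G →* MulAut G).range).Normal := by
  constructor
  rintro - ⟨g, rfl⟩ φ
  refine ⟨φ g, ?_⟩
  ext x
  simp [MulAut.conj_apply, mul_assoc]

/-- The outer automorphism group of a group: the quotient of the automorphism group
by the inner automorphisms. -/
def Out (G : Type*) [Group G] : Type _ :=
  MulAut G ⧸ (MulAut.conj : G →* MulAut G).range

instance (G : Type*) [Group G] : Group (Out G) :=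
  QuotientGroup.Quotient.group _

/-- The natural projection from the automorphism group onto the outer automorphism group. -/
def toOut (G : Type*) [Group G] : MulAut G →* Out G :=
  QuotientGroup.mk' _

/-- The star of a vertex: the vertex together with its neighbours
(the link being the neighbour set `Γ.neighborSet u`). -/
def star {V : Type*} (Γ : SimpleGraph V) (u : V) : Set V :=
  insert u (Γ.neighborSet u)

/-!
Let `φ` be an automorphism of `A_Γ` and let `M` be its matrix on the abelianization. Mapping `A_Γ`
to the Heisenberg group shows that the 2 × 2 minors of `M` on non-adjacent rows and adjacent columns
vanish. A dimension count on the spans of the columns indexed by stars then shows, in the absence of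
transvections, that `M` is a monomial matrix, and that if column `v` has its nonzero entry in row
`w`, then for each `u ∈ lk(w)` the image of some generator adjacent to `v` has nonzero exponent sum
at `u`.

If `g` has exponent sum zero at `u` and commutes with an element of nonzero exponent sum at `u`,
then `g` is conjugate to its retraction onto `⟨lk(u)⟩`: the kernel of the exponent sum at `u` is
the right-angled Artin group of an infinite cyclic cover of `Γ`, in which `g` is conjugate to
arbitrarily far translates of itself, and only the part of `g` over `lk(u)` survives both the
translation and the retraction onto the support of `g`. Hence `φ(v)` is conjugate into `⟨lk(u)⟩` for
all `u ∈ lk(w)`, and the intersection of these links is `{w}`. So every `φ` permutes the generators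
up to inversion and conjugacy, and two automorphisms inducing the same signed permutation differ by
a pure symmetric one.
-/

section GroupTheory

variable {G N H ι : Type*} [Group G] [Group N] [Group H]

theorem isConj_of_commute_inl {α : H →* MulAut N} {n : N} {y : N ⋊[α] H}
    (h : Commute (SemidirectProduct.inl n) y) : IsConj n (α y.right n) := by
  have hleft : n * y.left = y.left * α y.right n := by
    simpa using congrArg SemidirectProduct.left h.eq
  exact (isConj_iff.2 ⟨y.left, by rw [← hleft, mul_inv_cancel_right]⟩ : IsConj _ _).symm

/-- The group of pure symmetric automorphisms with respect to a family `s` of elements of `G`: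
those sending each member of `s` to a conjugate of itself. -/
def pureSymmetricAut (s : ι → G) : Subgroup (MulAut G) where
  carrier := {φ | ∀ i, IsConj (s i) (φ (s i))}
  one_mem' i := IsConj.refl (s i)
  mul_mem' {φ _} hφ hψ i := (hφ i).trans (φ.toMonoidHom.map_isConj (hψ i))
  inv_mem' {φ} hφ i := by
    simpa using ((φ⁻¹).toMonoidHom.map_isConj (hφ i)).symm

theorem mem_pureSymmetricAut {s : ι → G} {φ : MulAut G} :
    φ ∈ pureSymmetricAut s ↔ ∀ i, IsConj (s i) (φ (s i)) :=
  Iff.rfl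

theorem pureSymmetricAut_finiteIndex [Finite ι] {κ : Type*} [Finite κ] {s : ι → G} {t : κ → G}
    (h : ∀ (φ : MulAut G) (i : ι), ∃ k, IsConj (t k) (φ (s i))) :
    (pureSymmetricAut s).FiniteIndex := by
  choose f hf using h
  have hinj : Function.Injective fun q : MulAut G ⧸ pureSymmetricAut s => f q.out := by
    intro a b hab
    rw [← QuotientGroup.out_eq' a, ← QuotientGroup.out_eq' b, QuotientGroup.eq]
    intro i
    have hi : f a.out i = f b.out i := congrFun hab i
    have hconj : IsConj (a.out (s i)) (b.out (s i)) := (hf a.out i).symm.trans (hi ▸ hf b.out i)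
    simpa using (a.out⁻¹).toMonoidHom.map_isConj hconj
  have := Finite.of_injective _ hinj
  exact Subgroup.finiteIndex_of_finite_quotient

theorem finiteIndex_map_of_surjective {f : G →* H} (hf : Function.Surjective f)
    {K : Subgroup G} (hK : K.FiniteIndex) : (K.map f).FiniteIndex :=
  ⟨ne_zero_of_dvd_ne_zero hK.index_ne_zero (K.index_map_dvd hf)⟩

end GroupTheory

theorem exists_natCast_mul_add_ne (F : Finset ℤ) {e : ℤ} (he : e ≠ 0) :
    ∃ n : ℕ, ∀ i ∈ F, ∀ j ∈ F, n * e + i ≠ j := by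
  have hinj : Function.Injective fun n : ℕ => (n : ℤ) * e :=
    (mul_left_injective₀ he).comp Nat.cast_injective
  obtain ⟨n, hn⟩ := Infinite.exists_notMem_finset
    ((Finset.image₂ (· - ·) F F).preimage _ hinj.injOn)
  refine ⟨n, fun i hi j hj hij => hn ?_⟩
  rw [Finset.mem_preimage, eq_sub_of_add_eq hij]
  exact Finset.mem_image₂_of_mem hj hi

/-- The Heisenberg group over `R`: the triple `(p, q, r)` stands for the upper unitriangular matrix
with entries `p` and `q` above the diagonal and `r` in the corner. -/
@[ext]
structure HeisenbergGroup (R : Type*) where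
  p : R
  q : R
  r : R

namespace HeisenbergGroup

variable {R : Type*} [Ring R]

instance : Mul (HeisenbergGroup R) :=
  ⟨fun x y => ⟨x.p + y.p, x.q + y.q, x.r + y.r + x.p * y.q⟩⟩

instance : One (HeisenbergGroup R) := ⟨⟨0, 0, 0⟩⟩

instance : Inv (HeisenbergGroup R) := ⟨fun x => ⟨-x.p, -x.q, -x.r + x.p * x.q⟩⟩

theorem mul_def (x y : HeisenbergGroup R) :
    x * y = ⟨x.p + y.p, x.q + y.q, x.r + y.r + x.p * y.q⟩ :=
  rfl

theorem one_def : (1 : HeisenbergGroup R) = ⟨0, 0, 0⟩ := rfl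

theorem inv_def (x : HeisenbergGroup R) : x⁻¹ = ⟨-x.p, -x.q, -x.r + x.p * x.q⟩ := rfl

instance : Group (HeisenbergGroup R) :=
  Group.ofLeftAxioms
    (fun x y z => by
      ext
      · exact add_assoc _ _ _
      · exact add_assoc _ _ _
      · simp only [mul_def]
        noncomm_ring)
    (fun x => by simp [mul_def, one_def])
    (fun x => by simp [mul_def, one_def, inv_def])

theorem mul_eq_mul_of_commute {x y : HeisenbergGroup R} (h : Commute x y) :
    x.p * y.q = y.p * x.q := by
  have hr : x.r + y.r + x.p * y.q = y.r + x.r + y.p * x.q := congrArg r h.eq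
  rwa [add_comm y.r, add_right_inj] at hr

/-- The first superdiagonal entry as a homomorphism. -/
def pHom : HeisenbergGroup R →* Multiplicative R where
  toFun x := Multiplicative.ofAdd x.p
  map_one' := rfl
  map_mul' _ _ := rfl

/-- The second superdiagonal entry as a homomorphism. -/
def qHom : HeisenbergGroup R →* Multiplicative R where
  toFun x := Multiplicative.ofAdd x.q
  map_one' := rfl
  map_mul' _ _ := rfl

end HeisenbergGroup

section LinearAlgebra

variable {V R K : Type*} [CommRing R] [Field K] {Γ : SimpleGraph V}

theorem exists_perm_forall_apply_ne_zero [Fintype V] [DecidableEq V] {M : Matrix V V R}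
    (hM : M.det ≠ 0) : ∃ τ : Equiv.Perm V, ∀ v, M (τ v) v ≠ 0 := by
  rw [Matrix.det_apply] at hM
  obtain ⟨τ, -, hτ⟩ := Finset.exists_ne_zero_of_sum_ne_zero hM
  refine ⟨τ, fun v hv => hτ ?_⟩
  rw [Finset.prod_eq_zero (f := fun i => M (τ i) i) (Finset.mem_univ v) hv, smul_zero]

/-- The 2 × 2 minors of `M` on two non-adjacent rows and two adjacent columns vanish, as they do for
the matrix of an endomorphism of `RAAG Γ` on the abelianization. -/
def NonadjacentMinorsVanish (Γ : SimpleGraph V) (M : Matrix V V R) : Prop :=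
  ∀ ⦃v v'⦄, Γ.Adj v v' → ∀ ⦃a b⦄, ¬ Γ.Adj a b → M a v * M b v' = M b v * M a v'

/-- The span of the columns of `M` indexed by the star of `v`. -/
def starSpan (Γ : SimpleGraph V) (M : Matrix V V K) (v : V) : Submodule K (V → K) :=
  Submodule.span K (Set.range fun x : star Γ v => M.col x)

theorem mul_eq_mul_of_mem_starSpan {M : Matrix V V K} (hM : NonadjacentMinorsVanish Γ M)
    {v : V} {y : V → K} (hy : y ∈ starSpan Γ M v) {a b : V} (hab : ¬ Γ.Adj a b) :
    M a v * y b = M b v * y a := by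
  induction hy using Submodule.span_induction with
  | mem y hy =>
    obtain ⟨⟨x, rfl | hx⟩, rfl⟩ := hy
    · exact mul_comm _ _
    · exact hM hx hab
  | zero => simp
  | add y z _ _ hy hz => simp only [Pi.add_apply, mul_add, hy, hz]
  | smul c y _ hy => simp only [Pi.smul_apply, smul_eq_mul, mul_left_comm _ c, hy]

theorem apply_eq_zero_of_mem_starSpan {M : Matrix V V K} (hM : NonadjacentMinorsVanish Γ M)
    {v w : V} (hw : M w v ≠ 0) {y : V → K} (hy : y ∈ starSpan Γ M v) (hyw : y w = 0) {b : V}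
    (hb : b ∉ star Γ w) : y b = 0 := by
  have hwb : ¬ Γ.Adj w b := fun h => hb (Or.inr h)
  have hminor := mul_eq_mul_of_mem_starSpan hM hy hwb
  rw [hyw, mul_zero] at hminor
  exact (mul_eq_zero.1 hminor).resolve_left hw

/-- Restriction of the vectors in the span of the columns in `st(v)` to the coordinates in
`st(w)`. -/
def restrictStarSpan (Γ : SimpleGraph V) (M : Matrix V V K) (v w : V) :
    starSpan Γ M v →ₗ[K] star Γ w → K :=
  LinearMap.funLeft K K Subtype.val ∘ₗ (starSpan Γ M v).subtype

theorem restrictStarSpan_injective {M : Matrix V V K} (hM : NonadjacentMinorsVanish Γ M)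
    {v w : V} (hw : M w v ≠ 0) : Function.Injective (restrictStarSpan Γ M v w) := by
  rw [← LinearMap.ker_eq_bot, LinearMap.ker_eq_bot']
  intro y hy
  have hstar : ∀ a ∈ star Γ w, (y : V → K) a = 0 := fun a ha => congrFun hy ⟨a, ha⟩
  ext a
  by_cases ha : a ∈ star Γ w
  · exact hstar a ha
  · exact apply_eq_zero_of_mem_starSpan hM hw y.2 (hstar w (Set.mem_insert w _)) ha

theorem finrank_starSpan [Finite V] {M : Matrix V V K} (hM : LinearIndependent K M.col) (v : V) :
    Module.finrank K (starSpan Γ M v) = Nat.card (star Γ v) := by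
  have := Fintype.ofFinite (star Γ v)
  rw [Nat.card_eq_fintype_card]
  exact finrank_span_eq_card (hM.comp _ Subtype.val_injective)

theorem finrank_star_pi [Finite V] (v : V) :
    Module.finrank K (star Γ v → K) = Nat.card (star Γ v) := by
  have := Fintype.ofFinite (star Γ v)
  rw [Nat.card_eq_fintype_card, Module.finrank_fintype_fun_eq_card]

theorem card_star_le_card_star [Finite V] {M : Matrix V V K} (hM : NonadjacentMinorsVanish Γ M)
    (hli : LinearIndependent K M.col) {v w : V} (hw : M w v ≠ 0) :
    Nat.card (star Γ v) ≤ Nat.card (star Γ w) := by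
  rw [← finrank_starSpan hli, ← finrank_star_pi (K := K)]
  exact LinearMap.finrank_le_finrank_of_injective (restrictStarSpan_injective hM hw)

theorem card_star_eq_card_star_perm [Finite V] {M : Matrix V V K}
    (hM : NonadjacentMinorsVanish Γ M) (hli : LinearIndependent K M.col) {τ : Equiv.Perm V}
    (hτ : ∀ v, M (τ v) v ≠ 0) (v : V) : Nat.card (star Γ v) = Nat.card (star Γ (τ v)) := by
  have := Fintype.ofFinite V
  have hle : ∀ v ∈ Finset.univ, Nat.card (star Γ v) ≤ Nat.card (star Γ (τ v)) :=
    fun v _ => card_star_le_card_star hM hli (hτ v)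
  have hsum : ∑ v, Nat.card (star Γ v) = ∑ v, Nat.card (star Γ (τ v)) :=
    (Equiv.sum_comp τ fun v => Nat.card (star Γ v)).symm
  exact (Finset.sum_eq_sum_iff_of_le hle).1 hsum v (Finset.mem_univ v)

theorem single_mem_starSpan [Finite V] [DecidableEq V] {M : Matrix V V K}
    (hM : NonadjacentMinorsVanish Γ M) (hli : LinearIndependent K M.col) {v w u : V}
    (hw : M w v ≠ 0) (hcard : Nat.card (star Γ v) = Nat.card (star Γ w)) (hu : Γ.Adj w u) :
    Pi.single u 1 ∈ starSpan Γ M v := by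
  have hsurj : Function.Surjective (restrictStarSpan Γ M v w) :=
    (LinearMap.injective_iff_surjective_of_finrank_eq_finrank
      (by rw [finrank_starSpan hli, finrank_star_pi, hcard])).1 (restrictStarSpan_injective hM hw)
  obtain ⟨y, hy⟩ := hsurj fun a => (Pi.single u 1 : V → K) a
  have hstar : ∀ a ∈ star Γ w, (y : V → K) a = (Pi.single u 1 : V → K) a :=
    fun a ha => congrFun hy ⟨a, ha⟩
  have hyw : (y : V → K) w = 0 := by
    rw [hstar w (Set.mem_insert w _), Pi.single_eq_of_ne hu.ne]
  suffices hyu : (y : V → K) = Pi.single u 1 from hyu ▸ y.2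
  ext a
  by_cases ha : a ∈ star Γ w
  · exact hstar a ha
  · have hau : a ≠ u := by
      rintro rfl
      exact ha (Or.inr hu)
    rw [apply_eq_zero_of_mem_starSpan hM hw y.2 hyw ha, Pi.single_eq_of_ne hau]

theorem exists_adj_apply_ne_zero [DecidableEq V] {M : Matrix V V K} {u v : V}
    (hu : Pi.single u 1 ∈ starSpan Γ M v) (huv : M u v = 0) : ∃ v', Γ.Adj v v' ∧ M u v' ≠ 0 := by
  by_contra! hlink
  have hker : starSpan Γ M v ≤ LinearMap.ker (LinearMap.proj u : (V → K) →ₗ[K] K) := by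
    refine Submodule.span_le.2 ?_
    rintro _ ⟨⟨x, rfl | hx⟩, rfl⟩
    exacts [huv, hlink x hx]
  simpa using hker hu

theorem neighborSet_subset_star_of_apply_ne_zero [DecidableEq V] {M : Matrix V V K}
    (hM : NonadjacentMinorsVanish Γ M) {v w s : V}
    (hw : ∀ u, Γ.Adj w u → Pi.single u 1 ∈ starSpan Γ M v) (hs : M s v ≠ 0) :
    Γ.neighborSet w ⊆ star Γ s := by
  intro u hu
  by_contra hus
  have hsu : s ≠ u := fun h => hus (Or.inl h.symm)
  have hminor := mul_eq_mul_of_mem_starSpan hM (hw u hu) fun h => hus (Or.inr h)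
  rw [Pi.single_eq_same, Pi.single_eq_of_ne hsu, mul_one, mul_zero] at hminor
  exact hs hminor

theorem exists_col_support_singleton [Fintype V] [DecidableEq V]
    (hΓ : ∀ u v : V, Γ.neighborSet u ⊆ star Γ v → u = v) {M : Matrix V V K}
    (hM : NonadjacentMinorsVanish Γ M) (hdet : M.det ≠ 0) (v : V) :
    ∃ w, (∀ s ≠ w, M s v = 0) ∧ ∀ u, Γ.Adj w u → ∃ v', Γ.Adj v v' ∧ M u v' ≠ 0 := by
  have hli : LinearIndependent K M.col := Matrix.linearIndependent_cols_of_det_ne_zero hdet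
  obtain ⟨τ, hτ⟩ := exists_perm_forall_apply_ne_zero hdet
  have hsingle : ∀ u, Γ.Adj (τ v) u → Pi.single u 1 ∈ starSpan Γ M v := fun u =>
    single_mem_starSpan hM hli (hτ v) (card_star_eq_card_star_perm hM hli hτ v)
  have hzero : ∀ s ≠ τ v, M s v = 0 := by
    intro s hs
    by_contra hne
    exact hs (hΓ _ _ (neighborSet_subset_star_of_apply_ne_zero hM hsingle hne)).symm
  exact ⟨τ v, hzero, fun u hu => exists_adj_apply_ne_zero (hsingle u hu) (hzero u hu.ne')⟩

end LinearAlgebra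

namespace RAAG

section Basic

variable {V G : Type*} {Γ : SimpleGraph V} [Group G]

/-- The generator of `RAAG Γ` given by a vertex. -/
abbrev of (Γ : SimpleGraph V) (v : V) : RAAG Γ :=
  PresentedGroup.of (rels := raagRels Γ) v

/-- The homomorphism out of `RAAG Γ` given by the universal property. -/
def lift (f : V → G) (hf : ∀ v w, Γ.Adj v w → Commute (f v) (f w)) : RAAG Γ →* G :=
  PresentedGroup.toGroup (rels := raagRels Γ) (f := f) <| by
    rintro _ ⟨v, w, hvw, rfl⟩
    simpa [commutatorElement_eq_one_iff_commute] using hf v w hvw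

@[simp]
theorem lift_of (f : V → G) (hf : ∀ v w, Γ.Adj v w → Commute (f v) (f w)) (v : V) :
    lift f hf (of Γ v) = f v :=
  PresentedGroup.toGroup.of _

theorem commute_of_adj {v w : V} (h : Γ.Adj v w) : Commute (of Γ v) (of Γ w) := by
  have hrel : PresentedGroup.mk (raagRels Γ) ⁅FreeGroup.of v, FreeGroup.of w⁆ = 1 :=
    PresentedGroup.one_of_mem ⟨v, w, h, rfl⟩
  rw [map_commutatorElement] at hrel
  exact commutatorElement_eq_one_iff_commute.1 hrel

theorem conj_zpow_of_of_adj {u v : V} (h : Γ.Adj u v) (i : ℤ) :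
    MulAut.conj (of Γ u ^ i) (of Γ v) = of Γ v :=
  ((commute_of_adj h).zpow_left i).mul_inv_cancel

@[elab_as_elim]
theorem induction_on {P : RAAG Γ → Prop} (g : RAAG Γ) (one : P 1) (of : ∀ v, P (of Γ v))
    (inv : ∀ x, P x → P x⁻¹) (mul : ∀ x y, P x → P y → P (x * y)) : P g := by
  have hg : g ∈ Subgroup.closure (Set.range (RAAG.of Γ)) := by
    rw [PresentedGroup.closure_range_of]
    exact Subgroup.mem_top g
  induction hg using Subgroup.closure_induction with
  | mem x hx =>
    obtain ⟨v, rfl⟩ := hx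
    exact of v
  | one => exact one
  | mul x y _ _ hx hy => exact mul x y hx hy
  | inv x _ hx => exact inv x hx

end Basic

section ExpSum

variable {V : Type*} {Γ : SimpleGraph V}

/-- The exponent sum at the vertex `u`. -/
noncomputable def expSum (Γ : SimpleGraph V) (u : V) : RAAG Γ →* Multiplicative ℤ :=
  lift (Set.mulIndicator {u} fun _ => Multiplicative.ofAdd 1) fun _ _ _ => Commute.all _ _

@[simp]
theorem expSum_of_self (u : V) : expSum Γ u (of Γ u) = Multiplicative.ofAdd 1 := by
  simp [expSum]

theorem expSum_of_ne {u v : V} (h : v ≠ u) : expSum Γ u (of Γ v) = 1 := by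
  simp [expSum, h]

/-- The homomorphism to the Heisenberg group sending the non-adjacent vertices `a` and `b` to the
two standard generators (to their product if `a = b`) and all other vertices to `1`. -/
noncomputable def toHeisenberg {a b : V} (hab : ¬ Γ.Adj a b) : RAAG Γ →* HeisenbergGroup ℤ :=
  lift (Set.mulIndicator {a} (fun _ => ⟨1, 0, 0⟩) * Set.mulIndicator {b} fun _ => ⟨0, 1, 0⟩) <| by
    intro v w hvw
    by_cases hv : v = a ∨ v = b
    · have hwa : w ≠ a := by
        rintro rfl
        exact hv.elim hvw.ne fun h => hab (h ▸ hvw.symm)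
      have hwb : w ≠ b := by
        rintro rfl
        exact hv.elim (fun h => hab (h ▸ hvw)) hvw.ne
      simp [hwa, hwb]
    · push Not at hv
      simp [hv.1, hv.2]

theorem pHom_comp_toHeisenberg {a b : V} (hab : ¬ Γ.Adj a b) :
    HeisenbergGroup.pHom.comp (toHeisenberg hab) = expSum Γ a := by
  classical
  ext v
  simp [toHeisenberg, expSum, HeisenbergGroup.pHom, HeisenbergGroup.mul_def,
    HeisenbergGroup.one_def, Pi.mulSingle_apply, apply_ite HeisenbergGroup.p,
    apply_ite Multiplicative.toAdd]

theorem qHom_comp_toHeisenberg {a b : V} (hab : ¬ Γ.Adj a b) :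
    HeisenbergGroup.qHom.comp (toHeisenberg hab) = expSum Γ b := by
  classical
  ext v
  simp [toHeisenberg, expSum, HeisenbergGroup.qHom, HeisenbergGroup.mul_def,
    HeisenbergGroup.one_def, Pi.mulSingle_apply, apply_ite HeisenbergGroup.q,
    apply_ite Multiplicative.toAdd]

theorem expSum_mul_expSum_of_commute {g h : RAAG Γ} (hgh : Commute g h) {a b : V}
    (hab : ¬ Γ.Adj a b) :
    (expSum Γ a g).toAdd * (expSum Γ b h).toAdd = (expSum Γ b g).toAdd * (expSum Γ a h).toAdd := by
  rw [← pHom_comp_toHeisenberg hab, ← qHom_comp_toHeisenberg hab]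
  exact (HeisenbergGroup.mul_eq_mul_of_commute (hgh.map (toHeisenberg hab))).trans (mul_comm _ _)

end ExpSum

section ExpMatrix

variable {V W X : Type*} {Γ : SimpleGraph V} {Δ : SimpleGraph W} {Λ : SimpleGraph X}

/-- The matrix of the homomorphism induced by `φ` on abelianizations, in the bases of vertices. -/
noncomputable def expMatrix (φ : RAAG Γ →* RAAG Δ) : Matrix W V ℤ :=
  Matrix.of fun a v => (expSum Δ a (φ (of Γ v))).toAdd

theorem expMatrix_apply (φ : RAAG Γ →* RAAG Δ) (a : W) (v : V) :
    expMatrix φ a v = (expSum Δ a (φ (of Γ v))).toAdd :=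
  rfl

theorem expMatrix_id [DecidableEq V] : expMatrix (MonoidHom.id (RAAG Γ)) = 1 := by
  ext a v
  rcases eq_or_ne a v with rfl | hav
  · simp [expMatrix_apply]
  · simp [expMatrix_apply, expSum_of_ne hav.symm, hav]

theorem expSum_map [Fintype V] (φ : RAAG Γ →* RAAG Δ) (a : W) (g : RAAG Γ) :
    (expSum Δ a (φ g)).toAdd = ∑ v, expMatrix φ a v * (expSum Γ v g).toAdd := by
  induction g using induction_on with
  | one => simp
  | of w =>
    rw [Fintype.sum_eq_single w fun v hv => by simp [expSum_of_ne hv.symm]]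
    simp [expMatrix_apply]
  | inv x hx => simp [hx]
  | mul x y hx hy => simp [hx, hy, mul_add, Finset.sum_add_distrib]

theorem expMatrix_comp [Fintype W] (ψ : RAAG Δ →* RAAG Λ) (φ : RAAG Γ →* RAAG Δ) :
    expMatrix (ψ.comp φ) = expMatrix ψ * expMatrix φ := by
  ext a v
  exact expSum_map ψ a (φ (of Γ v))

theorem isUnit_det_expMatrix [Fintype V] [DecidableEq V] (φ : MulAut (RAAG Γ)) :
    IsUnit (expMatrix φ.toMonoidHom).det := by
  refine Matrix.isUnit_det_of_right_inverse (B := expMatrix (φ⁻¹).toMonoidHom) ?_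
  rw [← expMatrix_comp, ← expMatrix_id]
  congr
  ext v
  simp

end ExpMatrix

section Retraction

variable {V : Type*} {Γ : SimpleGraph V}

/-- The retraction of `RAAG Γ` onto the subgroup generated by `S`, killing the other vertices. -/
noncomputable def retraction (Γ : SimpleGraph V) (S : Set V) : RAAG Γ →* RAAG Γ :=
  lift (S.mulIndicator (of Γ)) fun v w h => by
    by_cases hv : v ∈ S <;> by_cases hw : w ∈ S <;> simp [hv, hw, commute_of_adj h]

theorem retraction_of_mem {S : Set V} {v : V} (h : v ∈ S) :
    retraction Γ S (of Γ v) = of Γ v := by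
  simp [retraction, h]

theorem retraction_of_notMem {S : Set V} {v : V} (h : v ∉ S) : retraction Γ S (of Γ v) = 1 := by
  simp [retraction, h]

theorem retraction_univ : retraction Γ Set.univ = MonoidHom.id (RAAG Γ) := by
  ext v
  exact retraction_of_mem (Set.mem_univ v)

theorem retraction_retraction (S T : Set V) (g : RAAG Γ) :
    retraction Γ S (retraction Γ T g) = retraction Γ (S ∩ T) g := by
  have hcomp : (retraction Γ S).comp (retraction Γ T) = retraction Γ (S ∩ T) := by
    ext v
    by_cases hS : v ∈ S <;> by_cases hT : v ∈ T <;> simp [retraction, hS, hT]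
  exact DFunLike.congr_fun hcomp g

theorem retraction_eq_self_of_subset {S T : Set V} (hST : S ⊆ T) {g : RAAG Γ}
    (hg : retraction Γ S g = g) : retraction Γ T g = g := by
  rw [← hg, retraction_retraction, Set.inter_eq_right.2 hST]

theorem retraction_singleton (w : V) (g : RAAG Γ) :
    retraction Γ {w} g = of Γ w ^ (expSum Γ w g).toAdd := by
  have hcomp : retraction Γ {w} = (zpowersHom (RAAG Γ) (of Γ w)).comp (expSum Γ w) := by
    ext v
    by_cases hv : v = w <;> simp [retraction, expSum, hv]
  rw [hcomp, MonoidHom.comp_apply, zpowersHom_apply]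

theorem exists_finset_retraction_eq_self (g : RAAG Γ) :
    ∃ F : Finset V, retraction Γ F g = g := by
  classical
  induction g using induction_on with
  | one => exact ⟨∅, map_one _⟩
  | of v => exact ⟨{v}, retraction_of_mem (by simp)⟩
  | inv x hx =>
    obtain ⟨F, hF⟩ := hx
    exact ⟨F, by rw [map_inv, hF]⟩
  | mul x y hx hy =>
    obtain ⟨F, hF⟩ := hx
    obtain ⟨E, hE⟩ := hy
    exact ⟨F ∪ E, by
      rw [map_mul, retraction_eq_self_of_subset (by simp) hF,
        retraction_eq_self_of_subset (by simp) hE]⟩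

theorem isConj_retraction_inter {S T : Set V} {g : RAAG Γ} (hS : IsConj g (retraction Γ S g))
    (hT : IsConj g (retraction Γ T g)) : IsConj g (retraction Γ (S ∩ T) g) := by
  have hST := (retraction Γ S).map_isConj hT
  rw [retraction_retraction] at hST
  exact hS.trans hST

theorem isConj_retraction_of_subset {S T : Set V} (hST : S ⊆ T) {g : RAAG Γ}
    (hS : IsConj g (retraction Γ S g)) : IsConj g (retraction Γ T g) := by
  have hT := (retraction Γ T).map_isConj hS
  rw [retraction_retraction, Set.inter_eq_right.2 hST] at hT
  exact hS.trans hT.symm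

theorem isConj_retraction_biInter {ι : Type*} {I : Set ι} (hI : I.Finite) {S : ι → Set V}
    {g : RAAG Γ} (hS : ∀ i ∈ I, IsConj g (retraction Γ (S i) g)) :
    IsConj g (retraction Γ (⋂ i ∈ I, S i) g) := by
  induction I, hI using Set.Finite.induction_on with
  | empty =>
    rw [Set.biInter_empty, retraction_univ]
    exact IsConj.refl g
  | @insert i I _ _ ih =>
    rw [Set.biInter_insert]
    exact isConj_retraction_inter (hS i (Set.mem_insert i I))
      (ih fun j hj => hS j (Set.mem_insert_of_mem i hj))

end Retraction

section CyclicCover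

variable {V : Type*} (Γ : SimpleGraph V) (u : V)

/-- The infinite cyclic cover of `Γ` at `u`, modelling the kernel of the exponent sum at `u`: the
vertex `(v, i)` stands for `uⁱ v u⁻ⁱ`. Identifying the copies of each neighbour of `u` and dropping
the vertices `(u, i)` would give the kernel exactly; keeping them avoids a quotient of `V × ℤ`. -/
def cyclicCover : SimpleGraph (V × ℤ) where
  Adj x y := Γ.Adj x.1 y.1 ∧ (x.2 = y.2 ∨ Γ.Adj u x.1 ∨ Γ.Adj u y.1)
  symm := ⟨fun _ _ h => ⟨h.1.symm, h.2.imp Eq.symm Or.symm⟩⟩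
  loopless := ⟨fun _ h => h.1.ne rfl⟩

open scoped Classical in
/-- Translation by `m` of the vertices of the cyclic cover, fixing those over the link of `u`. -/
noncomputable def shiftVertex (m : ℤ) (x : V × ℤ) : V × ℤ :=
  (x.1, if Γ.Adj u x.1 then x.2 else m + x.2)

variable {Γ u} in
theorem shiftVertex_of_adj {x : V × ℤ} (h : Γ.Adj u x.1) (m : ℤ) : shiftVertex Γ u m x = x := by
  simp [shiftVertex, h]

variable {Γ u} in
theorem shiftVertex_of_not_adj {x : V × ℤ} (h : ¬ Γ.Adj u x.1) (m : ℤ) :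
    shiftVertex Γ u m x = (x.1, m + x.2) := by
  simp [shiftVertex, h]

/-- The endomorphism of the Artin group of the cyclic cover induced by translation by `m`. -/
noncomputable def shift (m : ℤ) : RAAG (cyclicCover Γ u) →* RAAG (cyclicCover Γ u) :=
  lift (fun x => of _ (shiftVertex Γ u m x)) fun x y hxy => by
    refine commute_of_adj ⟨hxy.1, ?_⟩
    by_cases hx : Γ.Adj u x.1
    · exact Or.inr (Or.inl hx)
    by_cases hy : Γ.Adj u y.1
    · exact Or.inr (Or.inr hy)
    have hxy' : x.2 = y.2 := by simpa [hx, hy] using hxy.2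
    simp [shiftVertex, hx, hy, hxy']

@[simp]
theorem shift_of (m : ℤ) (x : V × ℤ) :
    shift Γ u m (of _ x) = of _ (shiftVertex Γ u m x) :=
  lift_of _ _ x

theorem shift_zero : shift Γ u 0 = MonoidHom.id _ := by
  ext x
  simp [shiftVertex]

theorem shift_add (m n : ℤ) : shift Γ u (m + n) = (shift Γ u m).comp (shift Γ u n) := by
  ext x
  by_cases hx : Γ.Adj u x.1 <;> simp [shiftVertex, hx, add_assoc]

/-- The action of `ℤ` by translations, through which `RAAG Γ` is a semidirect product. -/
noncomputable def shiftAction : Multiplicative ℤ →* MulAut (RAAG (cyclicCover Γ u)) where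
  toFun m := MonoidHom.toMulEquiv (shift Γ u m.toAdd) (shift Γ u (-m.toAdd))
    (by rw [← shift_add, neg_add_cancel, shift_zero])
    (by rw [← shift_add, add_neg_cancel, shift_zero])
  map_one' := MulEquiv.ext fun k => DFunLike.congr_fun (shift_zero Γ u) k
  map_mul' m n := MulEquiv.ext fun k => DFunLike.congr_fun (shift_add Γ u m.toAdd n.toAdd) k

theorem shiftAction_apply (m : Multiplicative ℤ) (k : RAAG (cyclicCover Γ u)) :
    shiftAction Γ u m k = shift Γ u m.toAdd k :=
  rfl

/-- The group containing `RAAG Γ` as a retract in which `u` acts on the cyclic cover by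
translation. -/
abbrev CoverExtension : Type _ :=
  RAAG (cyclicCover Γ u) ⋊[shiftAction Γ u] Multiplicative ℤ

theorem commute_inr_inl_of_adj {v : V} (h : Γ.Adj u v) :
    Commute (SemidirectProduct.inr (Multiplicative.ofAdd 1) : CoverExtension Γ u)
      (SemidirectProduct.inl (of _ (v, 0))) := by
  have haut := SemidirectProduct.inl_aut (φ := shiftAction Γ u) (Multiplicative.ofAdd 1)
    (of _ (v, 0))
  rw [shiftAction_apply, shift_of, shiftVertex_of_adj h, map_inv] at haut
  exact (eq_mul_inv_iff_mul_eq.1 haut).symm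

open scoped Classical in
/-- The embedding of `RAAG Γ` sending `u` to the translation and `v ≠ u` to `(v, 0)`. -/
noncomputable def toCoverExtension : RAAG Γ →* CoverExtension Γ u :=
  lift (fun v => if v = u then SemidirectProduct.inr (Multiplicative.ofAdd 1)
      else SemidirectProduct.inl (of _ (v, 0))) <| by
    intro v w hvw
    by_cases hv : v = u
    · subst hv
      simpa [hvw.ne'] using commute_inr_inl_of_adj Γ v hvw
    by_cases hw : w = u
    · subst hw
      simpa [hvw.ne] using (commute_inr_inl_of_adj Γ w hvw.symm).symm
    have hcover : (cyclicCover Γ u).Adj (v, 0) (w, 0) := ⟨hvw, Or.inl rfl⟩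
    simpa [hv, hw] using (commute_of_adj hcover).map SemidirectProduct.inl

theorem toCoverExtension_right (g : RAAG Γ) : (toCoverExtension Γ u g).right = expSum Γ u g := by
  have hcomp : SemidirectProduct.rightHom.comp (toCoverExtension Γ u) = expSum Γ u := by
    ext v
    by_cases hv : v = u <;> simp [toCoverExtension, expSum, hv]
  exact DFunLike.congr_fun hcomp g

theorem commute_conj_zpow_of_adj {v w : V} (hvw : Γ.Adj v w) (hv : Γ.Adj u v) (i j : ℤ) :
    Commute (MulAut.conj (of Γ u ^ i) (of Γ v)) (MulAut.conj (of Γ u ^ j) (of Γ w)) := by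
  rw [conj_zpow_of_of_adj hv, ← conj_zpow_of_of_adj hv j]
  exact (commute_of_adj hvw).map (MulAut.conj (of Γ u ^ j))

/-- The homomorphism sending `(v, i)` to `uⁱ v u⁻ⁱ`. -/
noncomputable def ofCover : RAAG (cyclicCover Γ u) →* RAAG Γ :=
  lift (fun x => MulAut.conj (of Γ u ^ x.2) (of Γ x.1)) <| by
    rintro ⟨v, i⟩ ⟨w, j⟩ ⟨hvw, hij | hv | hw⟩
    · obtain rfl : i = j := hij
      exact (commute_of_adj hvw).map (MulAut.conj (of Γ u ^ i))
    · exact commute_conj_zpow_of_adj Γ u hvw hv i j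
    · exact (commute_conj_zpow_of_adj Γ u hvw.symm hw j i).symm

@[simp]
theorem ofCover_of (x : V × ℤ) :
    ofCover Γ u (of _ x) = MulAut.conj (of Γ u ^ x.2) (of Γ x.1) :=
  lift_of _ _ x

theorem ofCover_comp_shift (m : ℤ) :
    (ofCover Γ u).comp (shift Γ u m) =
      (MulAut.conj (of Γ u ^ m)).toMonoidHom.comp (ofCover Γ u) := by
  ext x
  by_cases hx : Γ.Adj u x.1
  · simp only [MonoidHom.comp_apply, shift_of, ofCover_of, MulEquiv.coe_toMonoidHom,
      conj_zpow_of_of_adj hx, shiftVertex]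
  · simp only [MonoidHom.comp_apply, shift_of, ofCover_of, MulEquiv.coe_toMonoidHom,
      shiftVertex_of_not_adj hx, zpow_add, map_mul, MulAut.mul_apply]

/-- The retraction of the cover extension onto `RAAG Γ`. -/
noncomputable def ofCoverExtension : CoverExtension Γ u →* RAAG Γ :=
  SemidirectProduct.lift (ofCover Γ u) (zpowersHom _ (of Γ u)) fun m =>
    ofCover_comp_shift Γ u m.toAdd

@[simp]
theorem ofCoverExtension_inl (k : RAAG (cyclicCover Γ u)) :
    ofCoverExtension Γ u (SemidirectProduct.inl k) = ofCover Γ u k :=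
  SemidirectProduct.lift_inl _ _ _ k

@[simp]
theorem ofCoverExtension_inr (m : Multiplicative ℤ) :
    ofCoverExtension Γ u (SemidirectProduct.inr m) = of Γ u ^ m.toAdd :=
  SemidirectProduct.lift_inr _ _ _ m

theorem ofCoverExtension_toCoverExtension (g : RAAG Γ) :
    ofCoverExtension Γ u (toCoverExtension Γ u g) = g := by
  have hcomp : (ofCoverExtension Γ u).comp (toCoverExtension Γ u) = MonoidHom.id _ := by
    ext v
    by_cases hv : v = u <;> simp [toCoverExtension, hv]
  exact DFunLike.congr_fun hcomp g

theorem ofCover_retraction (k : RAAG (cyclicCover Γ u)) :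
    ofCover Γ u (retraction _ (Prod.fst ⁻¹' Γ.neighborSet u) k) =
      retraction Γ (Γ.neighborSet u) (ofCover Γ u k) := by
  have hcomp : (ofCover Γ u).comp (retraction _ (Prod.fst ⁻¹' Γ.neighborSet u)) =
      (retraction Γ (Γ.neighborSet u)).comp (ofCover Γ u) := by
    ext x
    by_cases hx : x.1 ∈ Γ.neighborSet u
    · have hxmem : x ∈ Prod.fst ⁻¹' Γ.neighborSet u := hx
      simp only [MonoidHom.comp_apply, retraction_of_mem hxmem, ofCover_of,
        conj_zpow_of_of_adj hx, retraction_of_mem hx]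
    · have hxmem : x ∉ Prod.fst ⁻¹' Γ.neighborSet u := hx
      simp only [MonoidHom.comp_apply, retraction_of_notMem hxmem, map_one, ofCover_of,
        MulAut.conj_apply, map_mul, map_inv, retraction_of_notMem hx, mul_one, mul_inv_cancel]
  exact DFunLike.congr_fun hcomp k

variable {Γ u}

theorem retraction_shift_eq_retraction {F : Set (V × ℤ)} {m : ℤ}
    (hF : ∀ x ∈ F, ∀ y ∈ F, m + x.2 ≠ y.2) {k : RAAG (cyclicCover Γ u)}
    (hk : retraction _ F k = k) :
    retraction _ F (shift Γ u m k) = retraction _ (Prod.fst ⁻¹' Γ.neighborSet u) k := by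
  have hcomp : ((retraction _ F).comp (shift Γ u m)).comp (retraction _ F) =
      (retraction _ (Prod.fst ⁻¹' Γ.neighborSet u)).comp (retraction (cyclicCover Γ u) F) := by
    ext x
    by_cases hxF : x ∈ F
    · by_cases hx : Γ.Adj u x.1
      · simp [retraction, hxF, hx, shiftVertex_of_adj hx]
      · have hshift : (x.1, m + x.2) ∉ F := fun h => hF x hxF _ h rfl
        simp [retraction, hxF, hx, shiftVertex_of_not_adj hx, hshift]
    · simp [retraction, hxF]
  simpa [hk] using DFunLike.congr_fun hcomp k

theorem exists_toCoverExtension_eq_inl {g : RAAG Γ} (hg : expSum Γ u g = 1) :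
    ∃ k, toCoverExtension Γ u g = SemidirectProduct.inl k ∧ ofCover Γ u k = g := by
  have hinl : toCoverExtension Γ u g = SemidirectProduct.inl (toCoverExtension Γ u g).left := by
    ext
    · rfl
    · rw [toCoverExtension_right, hg, SemidirectProduct.right_inl]
  refine ⟨_, hinl, ?_⟩
  rw [← ofCoverExtension_inl, ← hinl, ofCoverExtension_toCoverExtension]

theorem isConj_retraction_neighborSet {g h : RAAG Γ} (hgh : Commute g h) (hg : expSum Γ u g = 1)
    (hh : expSum Γ u h ≠ 1) : IsConj g (retraction Γ (Γ.neighborSet u) g) := by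
  obtain ⟨k, hgk, hkg⟩ := exists_toCoverExtension_eq_inl hg
  obtain ⟨F, hF⟩ := exists_finset_retraction_eq_self k
  obtain ⟨n, hn⟩ := exists_natCast_mul_add_ne (F.image Prod.snd) (e := (expSum Γ u h).toAdd) hh
  have hshift : IsConj k (shift Γ u (n * (expSum Γ u h).toAdd) k) := by
    have hcomm := (hgh.pow_right n).map (toCoverExtension Γ u)
    rw [hgk] at hcomm
    have hconj := isConj_of_commute_inl hcomm
    rwa [shiftAction_apply, toCoverExtension_right, map_pow, toAdd_pow, nsmul_eq_mul] at hconj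
  have hretract : retraction _ F (shift Γ u (n * (expSum Γ u h).toAdd) k) =
      retraction _ (Prod.fst ⁻¹' Γ.neighborSet u) k :=
    retraction_shift_eq_retraction (fun x hx y hy =>
      hn _ (Finset.mem_image_of_mem _ hx) _ (Finset.mem_image_of_mem _ hy)) hF
  have hconj := ((ofCover Γ u).comp (retraction _ F)).map_isConj hshift
  simpa only [MonoidHom.comp_apply, hF, hretract, ofCover_retraction, hkg] using hconj

end CyclicCover

section SignedPermutation

variable {V : Type*} {Γ : SimpleGraph V}

theorem nonadjacentMinorsVanish_expMatrix (φ : RAAG Γ →* RAAG Γ) :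
    NonadjacentMinorsVanish Γ (expMatrix φ) :=
  fun _ _ hv _ _ hab => expSum_mul_expSum_of_commute ((commute_of_adj hv).map φ) hab

theorem exists_expMatrix_col_support_singleton [Finite V]
    (hΓ : ∀ u v : V, Γ.neighborSet u ⊆ star Γ v → u = v) (φ : MulAut (RAAG Γ)) (v : V) :
    ∃ w, (∀ s ≠ w, expMatrix φ.toMonoidHom s v = 0) ∧
      ∀ u, Γ.Adj w u → ∃ v', Γ.Adj v v' ∧ expMatrix φ.toMonoidHom u v' ≠ 0 := by
  classical
  have := Fintype.ofFinite V
  have hminors : NonadjacentMinorsVanish Γ ((expMatrix φ.toMonoidHom).map (Int.castRingHom ℚ)) :=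
    fun _ _ hv _ _ hab => by
      simpa using congrArg (Int.cast : ℤ → ℚ) (nonadjacentMinorsVanish_expMatrix _ hv hab)
  have hdet : ((expMatrix φ.toMonoidHom).map (Int.castRingHom ℚ)).det ≠ 0 := by
    rw [← RingHom.mapMatrix_apply, ← RingHom.map_det]
    exact ((isUnit_det_expMatrix φ).map (Int.castRingHom ℚ)).ne_zero
  simpa using exists_col_support_singleton hΓ hminors hdet v

theorem isConj_zpow_expSum_of_link [Finite V] {w : V}
    (hw : ∀ s, Γ.neighborSet w ⊆ star Γ s → w = s) {g : RAAG Γ}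
    (hg : ∀ u ∈ Γ.neighborSet w, IsConj g (retraction Γ (Γ.neighborSet u) g)) :
    IsConj g (of Γ w ^ (expSum Γ w g).toAdd) := by
  have hlinks : ⋂ u ∈ Γ.neighborSet w, Γ.neighborSet u ⊆ {w} := fun s hs =>
    (hw s fun u hu => Or.inr (Set.mem_iInter₂.1 hs u hu).symm).symm
  rw [← retraction_singleton]
  exact isConj_retraction_of_subset hlinks (isConj_retraction_biInter (Set.toFinite _) hg)

theorem isUnit_of_isConj_zpow {φ : MulAut (RAAG Γ)} {v w : V} {m : ℤ}
    (h : IsConj (φ (of Γ v)) (of Γ w ^ m)) : IsUnit m := by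
  have hexp := isConj_iff_eq.1 (((expSum Γ v).comp (φ⁻¹).toMonoidHom).map_isConj h)
  rw [map_zpow] at hexp
  have hmul : 1 = m * (expSum Γ v (φ⁻¹ (of Γ w))).toAdd := by
    simpa using congrArg Multiplicative.toAdd hexp
  exact IsUnit.of_mul_eq_one _ hmul.symm

theorem exists_isConj_zpow [Finite V] (hΓ : ∀ u v : V, Γ.neighborSet u ⊆ star Γ v → u = v)
    (φ : MulAut (RAAG Γ)) (v : V) :
    ∃ p : V × ℤˣ, IsConj (of Γ p.1 ^ (p.2 : ℤ)) (φ (of Γ v)) := by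
  obtain ⟨w, hzero, hlink⟩ := exists_expMatrix_col_support_singleton hΓ φ v
  have hconj : IsConj (φ (of Γ v)) (of Γ w ^ (expSum Γ w (φ (of Γ v))).toAdd) := by
    refine isConj_zpow_expSum_of_link (hΓ w) fun u hu => ?_
    obtain ⟨v', hv', hne⟩ := hlink u hu
    exact isConj_retraction_neighborSet ((commute_of_adj hv').map φ) (hzero u hu.ne') hne
  obtain ⟨ε, hε⟩ := isUnit_of_isConj_zpow hconj
  exact ⟨(w, ε), hε ▸ hconj.symm⟩

end SignedPermutation

end RAAG

theorem pso_finiteIndex_of_no_transvections {V : Type} [Fintype V] (Γ : SimpleGraph V)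
    (h : ∀ u v : V, Γ.neighborSet u ⊆ star Γ v → u = v) :
    ∃ H : Subgroup (Out (RAAG Γ)),
      (H : Set (Out (RAAG Γ))) =
        {Φ : Out (RAAG Γ) | ∃ φ : MulAut (RAAG Γ), toOut (RAAG Γ) φ = Φ ∧
          ∀ v : V, ∃ g : RAAG Γ,
            φ (PresentedGroup.of (rels := raagRels Γ) v) =
              g * PresentedGroup.of (rels := raagRels Γ) v * g⁻¹} ∧
      H.FiniteIndex := by
  refine ⟨(pureSymmetricAut (RAAG.of Γ)).map (toOut (RAAG Γ)), ?_, ?_⟩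
  · ext Φ
    simp only [SetLike.mem_coe, Subgroup.mem_map, mem_pureSymmetricAut, isConj_iff,
      Set.mem_ofPred_eq, eq_comm, and_comm]
  · exact finiteIndex_map_of_surjective (QuotientGroup.mk'_surjective _)
      (pureSymmetricAut_finiteIndex (RAAG.exists_isConj_zpow h))
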